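/- If random variables α and β on a finite probability space are conditionally independent of order k, and γ is an arbitrary random variable on the same probability space, then H(γ) ≤ 2^k·H(γ|α) + 2^k·H(γ|β) − (2^{k+1} − 1)·H(γ|(α,β)); equivalently, I(γ:(α,β)) ≤ 2^k·I(γ:α|β) + 2^k·I(γ:β|α). -/

import Mathlib

open scoped BigOperators Classical

noncomputable section

/-- Probability of an event `E` under a distribution `μ` on a finite sample space `Ω`. -/
def pr {Ω : Type} [Fintype Ω] (μ : Ω → ℝ) (E : Ω → Prop) : ℝ :=
  ∑ ω, if E ω then μ ω else 0

/-- `μ` is a probability distribution on the finite space `Ω`. -/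
def IsProb {Ω : Type} [Fintype Ω] (μ : Ω → ℝ) : Prop :=
  (∀ ω, 0 ≤ μ ω) ∧ ∑ ω, μ ω = 1

/-- Shannon entropy (base 2) of a random variable `α` on a finite probability space. -/
def ent {Ω A : Type} [Fintype Ω] (μ : Ω → ℝ) (α : Ω → A) : ℝ :=
  -∑ a ∈ Finset.univ.image α,
      pr μ (fun ω => α ω = a) * Real.logb 2 (pr μ (fun ω => α ω = a))

/-- Conditional entropy `H(α | β)`. -/
def condEnt {Ω A B : Type} [Fintype Ω] (μ : Ω → ℝ) (α : Ω → A) (β : Ω → B) : ℝ :=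
  ent μ (fun ω => (α ω, β ω)) - ent μ β

/-- Mutual information `I(α : β)`. -/
def mutualInfo {Ω A B : Type} [Fintype Ω] (μ : Ω → ℝ) (α : Ω → A) (β : Ω → B) : ℝ :=
  ent μ α + ent μ β - ent μ (fun ω => (α ω, β ω))

/-- Conditional mutual information `I(α : β | γ)`. -/
def condMutualInfo {Ω A B C : Type} [Fintype Ω] (μ : Ω → ℝ)
    (α : Ω → A) (β : Ω → B) (γ : Ω → C) : ℝ :=
  condEnt μ α γ + condEnt μ β γ - condEnt μ (fun ω => (α ω, β ω)) γ

/-- Independence of two random variables. -/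
def Indep {Ω A B : Type} [Fintype Ω] (μ : Ω → ℝ) (α : Ω → A) (β : Ω → B) : Prop :=
  ∀ (a : A) (b : B),
    pr μ (fun ω => α ω = a ∧ β ω = b) =
      pr μ (fun ω => α ω = a) * pr μ (fun ω => β ω = b)

/-- Auxiliary form of "conditionally independent of order `k`" (explicit `Fintype`):
`α` and `β` are conditionally independent of order `0` if they are independent,
and of order `k + 1` if on some finite probability space there are random variables
`α₀, β₀, α*, β*` such that `(α₀, β₀)` has the same joint distribution as `(α, β)`,
`I(α₀ : β₀ | α*) = 0`, `I(α₀ : β₀ | β*) = 0`, and `α*, β*` are conditionally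
independent of order `k`. -/
def CondIndepOrderAux : ℕ → (Ω A B : Type) → Fintype Ω → (Ω → ℝ) → (Ω → A) → (Ω → B) → Prop
  | 0, _Ω, _A, _B, iΩ, μ, α, β => @Indep _ _ _ iΩ μ α β
  | k+1, _Ω, A, B, iΩ, μ, α, β =>
      ∃ (Ω' A' B' : Type) (iΩ' : Fintype Ω') (μ' : Ω' → ℝ)
        (α₀ : Ω' → A) (β₀ : Ω' → B) (αs : Ω' → A') (βs : Ω' → B'),
        @IsProb _ iΩ' μ' ∧
        (∀ (a : A) (b : B),
          @pr _ iΩ' μ' (fun ω => α₀ ω = a ∧ β₀ ω = b) =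
            @pr _ iΩ μ (fun ω => α ω = a ∧ β ω = b)) ∧
        @condMutualInfo _ _ _ _ iΩ' μ' α₀ β₀ αs = 0 ∧
        @condMutualInfo _ _ _ _ iΩ' μ' α₀ β₀ βs = 0 ∧
        CondIndepOrderAux k Ω' A' B' iΩ' μ' αs βs

/-- Random variables `α` and `β` on a finite probability space are
conditionally independent of order `k`. -/
def CondIndepOrder {Ω A B : Type} [iΩ : Fintype Ω]
    (μ : Ω → ℝ) (α : Ω → A) (β : Ω → B) (k : ℕ) : Prop :=
  CondIndepOrderAux k Ω A B iΩ μ α β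

/-- An `m × n` joint probability matrix: nonnegative entries summing to `1`. -/
def IsJointProbMatrix {m n : ℕ} (M : Matrix (Fin m) (Fin n) ℝ) : Prop :=
  (∀ i j, 0 ≤ M i j) ∧ ∑ i, ∑ j, M i j = 1

/-- `M` is the joint probability matrix of the pair `(α, β)`. -/
def IsJointMatrixOf {Ω : Type} [Fintype Ω] {m n : ℕ} (M : Matrix (Fin m) (Fin n) ℝ)
    (μ : Ω → ℝ) (α : Ω → Fin m) (β : Ω → Fin n) : Prop :=
  ∀ i j, M i j = pr μ (fun ω => α ω = i ∧ β ω = j)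

/-- `M` is a block matrix: rows and columns can be partitioned into two nonempty
parts so that the two diagonal blocks each contain a nonzero element and all
entries outside the diagonal blocks vanish. -/
def IsBlockMatrix {m n : ℕ} (M : Matrix (Fin m) (Fin n) ℝ) : Prop :=
  ∃ (I₁ : Finset (Fin m)) (J₁ : Finset (Fin n)),
    I₁.Nonempty ∧ I₁ᶜ.Nonempty ∧ J₁.Nonempty ∧ J₁ᶜ.Nonempty ∧
    (∃ i ∈ I₁, ∃ j ∈ J₁, M i j ≠ 0) ∧
    (∃ i ∈ I₁ᶜ, ∃ j ∈ J₁ᶜ, M i j ≠ 0) ∧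
    (∀ i j, ((i ∈ I₁ ∧ j ∈ J₁ᶜ) ∨ (i ∈ I₁ᶜ ∧ j ∈ J₁)) → M i j = 0)

/-- `M` is a good matrix: the joint probability matrix of some pair of
conditionally independent random variables (of some finite order). -/
def IsGoodMatrix {m n : ℕ} (M : Matrix (Fin m) (Fin n) ℝ) : Prop :=
  ∃ (Ω : Type) (iΩ : Fintype Ω) (μ : Ω → ℝ) (α : Ω → Fin m) (β : Ω → Fin n) (k : ℕ),
    @IsProb _ iΩ μ ∧ @IsJointMatrixOf _ iΩ _ _ M μ α β ∧
    @CondIndepOrder _ _ _ iΩ μ α β k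

/-- A stochastic matrix: nonnegative entries, all row sums equal to `1`. -/
def IsStochastic {m n : ℕ} (A : Matrix (Fin m) (Fin n) ℝ) : Prop :=
  (∀ i j, 0 ≤ A i j) ∧ ∀ i, ∑ j, A i j = 1

/-- The matrix `D_ε`: diagonal entries `1/2 - ε`, off-diagonal entries `ε`. -/
def Dmat (ε : ℝ) : Matrix (Fin 2) (Fin 2) ℝ :=
  fun i j => if i = j then 1/2 - ε else ε

/-- The distribution of `n` i.i.d. trials, each distributed according to `μ`. -/
def iidMeasure {Ω : Type} [Fintype Ω] (μ : Ω → ℝ) (n : ℕ) : (Fin n → Ω) → ℝ :=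
  fun ωv => ∏ i, μ (ωv i)

/-- The sequence of `n` coordinatewise copies of a random variable. -/
def iidRV {Ω A : Type} (α : Ω → A) (n : ℕ) : (Fin n → Ω) → (Fin n → A) :=
  fun ωv i => α (ωv i)

/-- `(u, v, w)` belongs to the rate region of the pair `(α, β)`. -/
def InRateRegion {Ω A B : Type} [Fintype Ω] (μ : Ω → ℝ) (α : Ω → A) (β : Ω → B)
    (u v w : ℝ) : Prop :=
  0 ≤ u ∧ 0 ≤ v ∧ 0 ≤ w ∧
  ∀ ε > (0:ℝ), ∀ δ > (0:ℝ), ∃ n₀ : ℕ, ∀ n ≥ n₀,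
    ∃ (t : (Fin n → A) × (Fin n → B) → (Fin ⌊(u + δ) * n⌋₊ → Bool))
      (f : (Fin n → A) × (Fin n → B) → (Fin ⌊(v + δ) * n⌋₊ → Bool))
      (g : (Fin n → A) × (Fin n → B) → (Fin ⌊(w + δ) * n⌋₊ → Bool))
      (r : (Fin ⌊(u + δ) * n⌋₊ → Bool) × (Fin ⌊(v + δ) * n⌋₊ → Bool) → (Fin n → A))
      (s : (Fin ⌊(u + δ) * n⌋₊ → Bool) × (Fin ⌊(w + δ) * n⌋₊ → Bool) → (Fin n → B)),
      pr (iidMeasure μ n) (fun ωv =>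
          r (t (iidRV α n ωv, iidRV β n ωv), f (iidRV α n ωv, iidRV β n ωv)) = iidRV α n ωv)
        > 1 - ε ∧
      pr (iidMeasure μ n) (fun ωv =>
          s (t (iidRV α n ωv, iidRV β n ωv), g (iidRV α n ωv, iidRV β n ωv)) = iidRV β n ωv)
        > 1 - ε

/-- The support of a matrix: the set of positions of its nonzero entries. -/
def msupport {m n : ℕ} (M : Matrix (Fin m) (Fin n) ℝ) : Set (Fin m × Fin n) :=
  {p | M p.1 p.2 ≠ 0}

/-- An r-matrix: nonnegative entries and rectangular support. -/
def IsRMatrix {m n : ℕ} (M : Matrix (Fin m) (Fin n) ℝ) : Prop :=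
  (∀ i j, 0 ≤ M i j) ∧ ∃ (A : Set (Fin m)) (B : Set (Fin n)), msupport M = A ×ˢ B

/-- An r-decomposition of `M`: an expression of `M` as a finite sum of r-matrices
such that the supports of consecutive summands intersect. -/
def IsRDecomposition {m n : ℕ} (M : Matrix (Fin m) (Fin n) ℝ)
    (l : ℕ) (Ms : Fin l → Matrix (Fin m) (Fin n) ℝ) : Prop :=
  M = ∑ i, Ms i ∧ (∀ i, IsRMatrix (Ms i)) ∧
  ∀ (i : ℕ) (h : i + 1 < l),
    (msupport (Ms ⟨i, Nat.lt_of_succ_lt h⟩) ∩ msupport (Ms ⟨i + 1, h⟩)).Nonempty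

end

/-! ### Helper lemmas -/

lemma pr_congr_ae {Ω : Type} [Fintype Ω] (μ : Ω → ℝ) (E F : Ω → Prop)
    (h : ∀ ω, μ ω ≠ 0 → (E ω ↔ F ω)) : pr μ E = pr μ F := by
  unfold pr
  refine Finset.sum_congr rfl fun ω _ => ?_
  by_cases hω : μ ω = 0
  · simp [hω]
  · simp [h ω hω]

lemma pr_nonneg {Ω : Type} [Fintype Ω] {μ : Ω → ℝ} (hμ : IsProb μ) (E : Ω → Prop) :
    0 ≤ pr μ E := by
  unfold pr
  refine Finset.sum_nonneg fun ω _ => ?_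
  split_ifs
  · exact hμ.1 ω
  · exact le_rfl

lemma le_pr {Ω : Type} [Fintype Ω] {μ : Ω → ℝ} (hμ : IsProb μ) (E : Ω → Prop) (ω : Ω)
    (h : E ω) : μ ω ≤ pr μ E := by
  unfold pr
  have := Finset.single_le_sum (f := fun ω => if E ω then μ ω else 0) (s := Finset.univ)
    (fun i _ => by
      split_ifs
      · exact hμ.1 i
      · exact le_rfl) (Finset.mem_univ ω)
  simpa [h] using this

lemma pr_pos {Ω : Type} [Fintype Ω] {μ : Ω → ℝ} (hμ : IsProb μ) (E : Ω → Prop) (ω : Ω)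
    (h : E ω) (h0 : μ ω ≠ 0) : 0 < pr μ E :=
  lt_of_lt_of_le (lt_of_le_of_ne (hμ.1 ω) (Ne.symm h0)) (le_pr hμ E ω h)

lemma ent_eq_sum {Ω A : Type} [Fintype Ω] (μ : Ω → ℝ) (X : Ω → A) :
    ent μ X = -∑ ω, μ ω * Real.logb 2 (pr μ (fun ω' => X ω' = X ω)) := by
  unfold ent
  congr 1
  rw [← Finset.sum_fiberwise_of_maps_to (s := Finset.univ) (t := Finset.univ.image X) (g := X)
    (fun ω _ => Finset.mem_image_of_mem X (Finset.mem_univ ω))]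
  refine Finset.sum_congr rfl fun a _ => ?_
  rw [Finset.sum_congr rfl (g := fun ω => μ ω * Real.logb 2 (pr μ (fun ω' => X ω' = a)))]
  · rw [← Finset.sum_mul, Finset.sum_filter]
    rfl
  · intro ω hω
    rw [(Finset.mem_filter.mp hω).2]

lemma ent_eq_sum_of_subset {Ω A : Type} [Fintype Ω] (μ : Ω → ℝ) (X : Ω → A) (s : Finset A)
    (hs : Finset.univ.image X ⊆ s) :
    ent μ X = -∑ a ∈ s, pr μ (fun ω => X ω = a) * Real.logb 2 (pr μ (fun ω => X ω = a)) := by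
  unfold ent
  congr 1
  refine Finset.sum_subset hs fun a _ ha => ?_
  have : pr μ (fun ω => X ω = a) = 0 := by
    unfold pr
    refine Finset.sum_eq_zero fun ω _ => ?_
    rw [if_neg]
    rintro rfl
    exact ha (Finset.mem_image_of_mem X (Finset.mem_univ ω))
  simp [this]

lemma ent_law {Ω Ω' A : Type} [Fintype Ω] [Fintype Ω'] (μ : Ω → ℝ) (μ' : Ω' → ℝ)
    (X : Ω → A) (Y : Ω' → A)
    (h : ∀ a, pr μ (fun ω => X ω = a) = pr μ' (fun ω => Y ω = a)) : ent μ X = ent μ' Y := by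
  rw [ent_eq_sum_of_subset μ X (Finset.univ.image X ∪ Finset.univ.image Y)
    Finset.subset_union_left,
    ent_eq_sum_of_subset μ' Y (Finset.univ.image X ∪ Finset.univ.image Y)
    Finset.subset_union_right]
  simp only [h]

lemma ent_congr_ae {Ω A : Type} [Fintype Ω] (μ : Ω → ℝ) (X Y : Ω → A)
    (h : ∀ ω, μ ω ≠ 0 → X ω = Y ω) : ent μ X = ent μ Y :=
  ent_law μ μ X Y fun a => pr_congr_ae μ _ _ fun ω hω => by rw [h ω hω]

lemma ent_reindex {Ω A B : Type} [Fintype Ω] (μ : Ω → ℝ) (X : Ω → A) (Y : Ω → B)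
    (h : ∀ ω ω', X ω = X ω' ↔ Y ω = Y ω') : ent μ X = ent μ Y := by
  simp only [ent_eq_sum, h]

/-- Submodularity of entropy. -/
lemma ent_submod {Ω A B C : Type} [Fintype Ω] {μ : Ω → ℝ} (hμ : IsProb μ)
    (a : Ω → A) (b : Ω → B) (c : Ω → C) :
    ent μ (fun ω => (a ω, (b ω, c ω))) + ent μ c ≤
      ent μ (fun ω => (a ω, c ω)) + ent μ (fun ω => (b ω, c ω)) := by
  set pabc : Ω → ℝ := fun ω => pr μ (fun ω' => (a ω', (b ω', c ω')) = (a ω, (b ω, c ω))) with hpabc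
  set pac : Ω → ℝ := fun ω => pr μ (fun ω' => (a ω', c ω') = (a ω, c ω)) with hpac
  set pbc : Ω → ℝ := fun ω => pr μ (fun ω' => (b ω', c ω') = (b ω, c ω)) with hpbc
  set pc : Ω → ℝ := fun ω => pr μ (fun ω' => c ω' = c ω) with hpc
  have key : ∑ ω, μ ω * (pac ω * pbc ω / (pabc ω * pc ω)) ≤ 1 := by
    -- rewrite as triple sum
    have e1 : ∀ ω, μ ω * (pac ω * pbc ω / (pabc ω * pc ω)) =
        ∑ ω₁, ∑ ω₂, μ ω₁ * μ ω₂ * (if (a ω₁, c ω₁) = (a ω, c ω) ∧ (b ω₂, c ω₂) = (b ω, c ω)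
          then μ ω / (pabc ω * pc ω) else 0) := by
      intro ω
      have : pac ω * pbc ω = ∑ ω₁, ∑ ω₂, μ ω₁ * μ ω₂ *
          (if (a ω₁, c ω₁) = (a ω, c ω) ∧ (b ω₂, c ω₂) = (b ω, c ω) then 1 else 0) := by
        simp only [hpac, hpbc, pr]
        rw [Finset.sum_mul_sum]
        refine Finset.sum_congr rfl fun ω₁ _ => Finset.sum_congr rfl fun ω₂ _ => ?_
        by_cases h1 : (a ω₁, c ω₁) = (a ω, c ω) <;> by_cases h2 : (b ω₂, c ω₂) = (b ω, c ω) <;>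
          simp only [h1, h2, if_true, if_false, and_true, and_false, mul_zero, zero_mul, mul_one]
      rw [mul_div_assoc', this, mul_comm, ← mul_div, Finset.sum_mul]
      refine Finset.sum_congr rfl fun ω₁ _ => ?_
      rw [Finset.sum_mul]
      refine Finset.sum_congr rfl fun ω₂ _ => ?_
      split_ifs <;> ring
    have e2 : ∀ ω₁ ω₂, ∑ ω, (if (a ω₁, c ω₁) = (a ω, c ω) ∧ (b ω₂, c ω₂) = (b ω, c ω)
          then μ ω / (pabc ω * pc ω) else 0) ≤ if c ω₂ = c ω₁ then 1 / pc ω₁ else 0 := by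
      intro ω₁ ω₂
      split_ifs with hc
      · set q := pr μ (fun ω => (a ω, (b ω, c ω)) = (a ω₁, (b ω₂, c ω₁))) with hq
        have e3 : ∀ ω, (if (a ω₁, c ω₁) = (a ω, c ω) ∧ (b ω₂, c ω₂) = (b ω, c ω)
          then μ ω / (pabc ω * pc ω) else 0) =
            (if (a ω, (b ω, c ω)) = (a ω₁, (b ω₂, c ω₁)) then μ ω else 0) * (1 / (q * pc ω₁)) := by
          intro ω
          by_cases h : (a ω, (b ω, c ω)) = (a ω₁, (b ω₂, c ω₁))
          · have h' := h
            simp only [Prod.mk.injEq] at h'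
            obtain ⟨h1, h2, h3⟩ := h'
            rw [if_pos h, if_pos (by simp [h1, h2, h3, hc])]
            simp only [hpabc, hpc, hq, h1, h2, h3]
            ring
          · rw [if_neg h, if_neg, zero_mul]
            rintro ⟨h1, h2⟩
            simp only [Prod.mk.injEq] at h1 h2
            exact h (by rw [h1.1, h2.1, h1.2])
        rw [Finset.sum_congr rfl fun ω _ => e3 ω, ← Finset.sum_mul]
        have hsum : (∑ ω, if (a ω, (b ω, c ω)) = (a ω₁, (b ω₂, c ω₁)) then μ ω else 0) = q := by
          rw [hq, pr]
          refine Finset.sum_congr rfl fun ω _ => ?_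
          split_ifs <;> rfl
        rw [hsum]
        have hpc1 : 0 ≤ 1 / pc ω₁ := one_div_nonneg.mpr (pr_nonneg hμ _)
        by_cases h0 : q = 0
        · rw [h0, zero_mul]; exact hpc1
        · rw [one_div, mul_inv, ← mul_assoc, mul_inv_cancel₀ h0, one_mul, one_div]
      · refine le_of_eq (Finset.sum_eq_zero fun ω _ => if_neg ?_)
        rintro ⟨h1, h2⟩
        simp only [Prod.mk.injEq] at h1 h2
        exact hc (by rw [h1.2, h2.2])
    calc ∑ ω, μ ω * (pac ω * pbc ω / (pabc ω * pc ω))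
        = ∑ ω₁, ∑ ω₂, μ ω₁ * μ ω₂ * ∑ ω, (if (a ω₁, c ω₁) = (a ω, c ω) ∧
            (b ω₂, c ω₂) = (b ω, c ω) then μ ω / (pabc ω * pc ω) else 0) := by
          rw [Finset.sum_congr rfl fun ω _ => e1 ω, Finset.sum_comm]
          refine Finset.sum_congr rfl fun ω₁ _ => ?_
          rw [Finset.sum_comm]
          refine Finset.sum_congr rfl fun ω₂ _ => ?_
          rw [Finset.mul_sum]
      _ ≤ ∑ ω₁, ∑ ω₂, μ ω₁ * μ ω₂ * (if c ω₂ = c ω₁ then 1 / pc ω₁ else 0) := by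
          refine Finset.sum_le_sum fun ω₁ _ => Finset.sum_le_sum fun ω₂ _ => ?_
          exact mul_le_mul_of_nonneg_left (e2 ω₁ ω₂) (mul_nonneg (hμ.1 _) (hμ.1 _))
      _ = ∑ ω₁, μ ω₁ * (pc ω₁ / pc ω₁) := by
          refine Finset.sum_congr rfl fun ω₁ _ => ?_
          have hsum : pc ω₁ = ∑ ω₂, if c ω₂ = c ω₁ then μ ω₂ else 0 := rfl
          rw [div_eq_mul_one_div (pc ω₁) (pc ω₁)]
          generalize 1 / pc ω₁ = t
          rw [hsum, Finset.sum_mul, Finset.mul_sum]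
          refine Finset.sum_congr rfl fun ω₂ _ => ?_
          split_ifs <;> ring
      _ ≤ ∑ ω₁, μ ω₁ := by
          refine Finset.sum_le_sum fun ω₁ _ => ?_
          exact mul_le_of_le_one_right (hμ.1 _) (div_self_le_one _)
      _ = 1 := hμ.2
  have hl2 : 0 < Real.log 2 := Real.log_pos (by norm_num)
  have pt : ∀ ω, μ ω * (Real.logb 2 (pac ω) + Real.logb 2 (pbc ω) - Real.logb 2 (pabc ω)
      - Real.logb 2 (pc ω)) ≤ (μ ω * (pac ω * pbc ω / (pabc ω * pc ω)) - μ ω) / Real.log 2 := by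
    intro ω
    by_cases h0 : μ ω = 0
    · simp [h0]
    have h1 : 0 < pac ω := pr_pos hμ _ ω rfl h0
    have h2 : 0 < pbc ω := pr_pos hμ _ ω rfl h0
    have h3 : 0 < pabc ω := pr_pos hμ _ ω rfl h0
    have h4 : 0 < pc ω := pr_pos hμ _ ω rfl h0
    have hlog := Real.log_le_sub_one_of_pos (x := pac ω * pbc ω / (pabc ω * pc ω)) (by positivity)
    rw [Real.log_div (by positivity) (by positivity), Real.log_mul h1.ne' h2.ne',
      Real.log_mul h3.ne' h4.ne'] at hlog
    have hm := mul_le_mul_of_nonneg_left hlog (hμ.1 ω)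
    rw [le_div_iff₀ hl2]
    simp only [Real.logb]
    have : μ ω * (Real.log (pac ω) / Real.log 2 + Real.log (pbc ω) / Real.log 2
        - Real.log (pabc ω) / Real.log 2 - Real.log (pc ω) / Real.log 2) * Real.log 2 =
        μ ω * (Real.log (pac ω) + Real.log (pbc ω) - (Real.log (pabc ω) + Real.log (pc ω))) := by
      field_simp
      ring
    rw [this]
    linarith
  have hs := Finset.sum_le_sum (s := Finset.univ) fun ω _ => pt ω
  rw [← Finset.sum_div, Finset.sum_sub_distrib, hμ.2] at hs
  have hs' := hs.trans (div_nonpos_of_nonpos_of_nonneg (sub_nonpos.mpr key) hl2.le)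
  simp only [mul_sub, mul_add, Finset.sum_sub_distrib, Finset.sum_add_distrib] at hs'
  rw [ent_eq_sum, ent_eq_sum, ent_eq_sum, ent_eq_sum]
  change -(∑ ω, μ ω * Real.logb 2 (pabc ω)) + -(∑ ω, μ ω * Real.logb 2 (pc ω)) ≤
    -(∑ ω, μ ω * Real.logb 2 (pac ω)) + -(∑ ω, μ ω * Real.logb 2 (pbc ω))
  linarith

/-- Conditioning on more decreases entropy. -/
lemma condEnt_comp_le {Ω C D E : Type} [Fintype Ω] {μ : Ω → ℝ} (hμ : IsProb μ)
    (g : Ω → C) (w : Ω → D) (f : D → E) :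
    condEnt μ g w ≤ condEnt μ g (fun ω => f (w ω)) := by
  have h := ent_submod hμ g w (fun ω => f (w ω))
  have h1 : ent μ (fun ω => (g ω, (w ω, f (w ω)))) = ent μ (fun ω => (g ω, w ω)) :=
    ent_reindex _ _ _ fun ω ω' => by
      simp only [Prod.mk.injEq]
      exact ⟨fun h => ⟨h.1, h.2.1⟩, fun h => ⟨h.1, h.2, by rw [h.2]⟩⟩
  have h2 : ent μ (fun ω => (w ω, f (w ω))) = ent μ w :=
    ent_reindex _ _ _ fun ω ω' => by
      simp only [Prod.mk.injEq]
      exact ⟨fun h => h.1, fun h => ⟨h, by rw [h]⟩⟩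
  unfold condEnt
  linarith

lemma condEnt_le_of_condMutualInfo {Ω A B C S : Type} [Fintype Ω] {μ : Ω → ℝ} (hμ : IsProb μ)
    (a : Ω → A) (b : Ω → B) (g : Ω → C) (s : Ω → S) (h : condMutualInfo μ a b s = 0) :
    condEnt μ g s ≤ condEnt μ g a + condEnt μ g b - condEnt μ g (fun ω => ((a ω, b ω), s ω)) := by
  have h1 := ent_submod hμ a b (fun ω => (g ω, s ω))
  have h2 := condEnt_comp_le hμ g (fun ω => (a ω, s ω)) Prod.fst
  have h3 := condEnt_comp_le hμ g (fun ω => (b ω, s ω)) Prod.fst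
  have r1 : ent μ (fun ω => (a ω, (b ω, (g ω, s ω)))) =
      ent μ (fun ω => (g ω, ((a ω, b ω), s ω))) :=
    ent_reindex _ _ _ fun ω ω' => by simp only [Prod.mk.injEq]; tauto
  have r2 : ent μ (fun ω => (a ω, (g ω, s ω))) = ent μ (fun ω => (g ω, (a ω, s ω))) :=
    ent_reindex _ _ _ fun ω ω' => by simp only [Prod.mk.injEq]; tauto
  have r3 : ent μ (fun ω => (b ω, (g ω, s ω))) = ent μ (fun ω => (g ω, (b ω, s ω))) :=
    ent_reindex _ _ _ fun ω ω' => by simp only [Prod.mk.injEq]; tauto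
  simp only [condMutualInfo, condEnt] at *
  linarith

lemma ent_of_indep {Ω A B : Type} [Fintype Ω] {μ : Ω → ℝ} (hμ : IsProb μ)
    (a : Ω → A) (b : Ω → B) (h : Indep μ a b) :
    ent μ (fun ω => (a ω, b ω)) = ent μ a + ent μ b := by
  rw [ent_eq_sum, ent_eq_sum, ent_eq_sum, ← neg_add, ← Finset.sum_add_distrib]
  congr 1
  refine Finset.sum_congr rfl fun ω _ => ?_
  by_cases h0 : μ ω = 0
  · simp [h0]
  have h1 : 0 < pr μ (fun ω' => a ω' = a ω) := pr_pos hμ _ ω rfl h0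
  have h2 : 0 < pr μ (fun ω' => b ω' = b ω) := pr_pos hμ _ ω rfl h0
  simp only [Prod.mk.injEq]
  rw [h, Real.logb_mul h1.ne' h2.ne']
  ring

/-- The trivial variable has entropy zero. -/
lemma ent_unit {Ω : Type} [Fintype Ω] {μ : Ω → ℝ} (hμ : IsProb μ) :
    ent μ (fun _ : Ω => ()) = 0 := by
  rw [ent_eq_sum]
  simp [pr, hμ.2]

lemma ent_base {Ω A B C : Type} [Fintype Ω] {μ : Ω → ℝ} (hμ : IsProb μ)
    (a : Ω → A) (b : Ω → B) (g : Ω → C) (h : Indep μ a b) :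
    ent μ g ≤ condEnt μ g a + condEnt μ g b - condEnt μ g (fun ω => (a ω, b ω)) := by
  have h1 := ent_submod hμ a b g
  have h2 := ent_of_indep hμ a b h
  have r1 : ent μ (fun ω => (a ω, (b ω, g ω))) = ent μ (fun ω => (g ω, (a ω, b ω))) :=
    ent_reindex _ _ _ fun ω ω' => by simp only [Prod.mk.injEq]; tauto
  have r2 : ent μ (fun ω => (a ω, g ω)) = ent μ (fun ω => (g ω, a ω)) :=
    ent_reindex _ _ _ fun ω ω' => by simp only [Prod.mk.injEq]; tauto
  have r3 : ent μ (fun ω => (b ω, g ω)) = ent μ (fun ω => (g ω, b ω)) :=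
    ent_reindex _ _ _ fun ω ω' => by simp only [Prod.mk.injEq]; tauto
  simp only [condEnt]
  linarith

lemma pr_fst {Ω Ω' : Type} [Fintype Ω] [Fintype Ω'] (ν : Ω' × Ω → ℝ) (μ' : Ω' → ℝ)
    (h : ∀ ω', ∑ ω, ν (ω', ω) = μ' ω') (E : Ω' → Prop) :
    pr ν (fun p => E p.1) = pr μ' E := by
  unfold pr
  rw [Fintype.sum_prod_type]
  refine Finset.sum_congr rfl fun ω' _ => ?_
  by_cases hE : E ω' <;> simp [hE, h]

lemma pr_snd {Ω Ω' : Type} [Fintype Ω] [Fintype Ω'] (ν : Ω' × Ω → ℝ) (μ : Ω → ℝ)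
    (h : ∀ ω, ∑ ω', ν (ω', ω) = μ ω) (E : Ω → Prop) :
    pr ν (fun p => E p.2) = pr μ E := by
  unfold pr
  rw [Fintype.sum_prod_type_right]
  refine Finset.sum_congr rfl fun ω' _ => ?_
  by_cases hE : E ω' <;> simp [hE, h]

lemma condIndepOrderAux_fst {Ω Ω' A B : Type} [iΩ : Fintype Ω] [iΩ' : Fintype Ω']
    (ν : Ω' × Ω → ℝ) (μ' : Ω' → ℝ)
    (h : ∀ ω', ∑ ω, ν (ω', ω) = μ' ω') (a : Ω' → A) (b : Ω' → B) (k : ℕ)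
    (hk : CondIndepOrder μ' a b k) :
    CondIndepOrder ν (fun p => a p.1) (fun p => b p.1) k := by
  cases k with
  | zero =>
    intro x y
    have := hk x y
    rw [pr_fst ν μ' h (fun ω => a ω = x ∧ b ω = y), pr_fst ν μ' h (fun ω => a ω = x),
      pr_fst ν μ' h (fun ω => b ω = y)]
    exact this
  | succ k =>
    obtain ⟨Ω₁, A₁, B₁, i₁, μ₁, α₀, β₀, αs, βs, h1, h2, h3, h4, h5⟩ := hk
    refine ⟨Ω₁, A₁, B₁, i₁, μ₁, α₀, β₀, αs, βs, h1, fun x y => ?_, h3, h4, h5⟩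
    rw [h2]
    exact (pr_fst ν μ' h (fun ω => a ω = x ∧ b ω = y)).symm

/-- Coupling of two spaces over variables with a common law. -/
noncomputable def coupling {Ω Ω' D : Type} [Fintype Ω] (μ : Ω → ℝ) (μ' : Ω' → ℝ) (X : Ω → D) (X₀ : Ω' → D) :
    Ω' × Ω → ℝ := fun p =>
  if X p.2 = X₀ p.1 then μ' p.1 * μ p.2 / pr μ (fun ω => X ω = X p.2) else 0

section Coupling

variable {Ω Ω' D : Type} [Fintype Ω] [Fintype Ω'] {μ : Ω → ℝ} {μ' : Ω' → ℝ}
  {X : Ω → D} {X₀ : Ω' → D}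

lemma coupling_fst (hμ' : IsProb μ')
    (hX : ∀ x, pr μ' (fun ω => X₀ ω = x) = pr μ (fun ω => X ω = x)) (ω' : Ω') :
    ∑ ω, coupling μ μ' X X₀ (ω', ω) = μ' ω' := by
  have : ∀ ω, coupling μ μ' X X₀ (ω', ω) =
      (if X ω = X₀ ω' then μ ω else 0) * (μ' ω' / pr μ (fun ω => X ω = X₀ ω')) := by
    intro ω
    unfold coupling
    dsimp only
    split_ifs with h
    · rw [h]; ring
    · ring
  rw [Finset.sum_congr rfl fun ω _ => this ω, ← Finset.sum_mul]
  change pr μ (fun ω => X ω = X₀ ω') * _ = _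
  by_cases h0 : μ' ω' = 0
  · simp [h0]
  have hp : 0 < pr μ (fun ω => X ω = X₀ ω') := by
    rw [← hX]
    exact pr_pos hμ' _ ω' rfl h0
  field_simp

lemma coupling_snd (hμ : IsProb μ)
    (hX : ∀ x, pr μ' (fun ω => X₀ ω = x) = pr μ (fun ω => X ω = x)) (ω : Ω) :
    ∑ ω', coupling μ μ' X X₀ (ω', ω) = μ ω := by
  have : ∀ ω', coupling μ μ' X X₀ (ω', ω) =
      (if X₀ ω' = X ω then μ' ω' else 0) * (μ ω / pr μ (fun ω' => X ω' = X ω)) := by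
    intro ω'
    unfold coupling
    dsimp only
    by_cases h : X ω = X₀ ω'
    · rw [if_pos h, if_pos h.symm]; ring
    · rw [if_neg h, if_neg (fun h' => h h'.symm)]; ring
  rw [Finset.sum_congr rfl fun ω _ => this ω, ← Finset.sum_mul]
  change pr μ' (fun ω' => X₀ ω' = X ω) * _ = _
  rw [hX]
  by_cases h0 : μ ω = 0
  · simp [h0]
  have hp : 0 < pr μ (fun ω' => X ω' = X ω) := pr_pos hμ _ ω rfl h0
  field_simp

lemma coupling_isProb (hμ : IsProb μ) (hμ' : IsProb μ')
    (hX : ∀ x, pr μ' (fun ω => X₀ ω = x) = pr μ (fun ω => X ω = x)) :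
    IsProb (coupling μ μ' X X₀) := by
  constructor
  · intro p
    unfold coupling
    split_ifs
    · exact div_nonneg (mul_nonneg (hμ'.1 _) (hμ.1 _)) (pr_nonneg hμ _)
    · exact le_rfl
  · rw [Fintype.sum_prod_type, Finset.sum_congr rfl fun ω' _ => coupling_fst hμ' hX ω', hμ'.2]

lemma coupling_ne (p : Ω' × Ω) (h : coupling μ μ' X X₀ p ≠ 0) :
    X p.2 = X₀ p.1 ∧ μ' p.1 ≠ 0 ∧ μ p.2 ≠ 0 := by
  unfold coupling at h
  split_ifs at h with hX
  · refine ⟨hX, ?_, ?_⟩ <;> intro h0 <;> simp [h0] at h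
  · exact absurd rfl h

/-- The Markov property of the coupling. -/
lemma coupling_condEnt {C : Type} (hμ : IsProb μ) (hμ' : IsProb μ')
    (hX : ∀ x, pr μ' (fun ω => X₀ ω = x) = pr μ (fun ω => X ω = x)) (γ : Ω → C) :
    condEnt (coupling μ μ' X X₀) (fun p => γ p.2) (fun p => p.1) = condEnt μ γ X := by
  set ν := coupling μ μ' X X₀ with hν
  have f1 := coupling_fst (X := X) hμ' hX
  have f2 := coupling_snd (X₀ := X₀) hμ hX
  have e1 : ent μ (fun ω => (γ ω, X ω)) = ent ν (fun p => (γ p.2, X p.2)) :=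
    ent_law _ _ _ _ fun a => (pr_snd ν μ f2 (fun ω => (γ ω, X ω) = a)).symm
  have e2 : ent μ X = ent ν (fun p => X p.2) :=
    ent_law _ _ _ _ fun a => (pr_snd ν μ f2 (fun ω => X ω = a)).symm
  unfold condEnt
  rw [e1, e2]
  suffices h : ent ν (fun p => (γ p.2, p.1)) + ent ν (fun p => X p.2) =
      ent ν (fun p => (γ p.2, X p.2)) + ent ν (fun p => p.1) by linarith
  rw [ent_eq_sum, ent_eq_sum, ent_eq_sum, ent_eq_sum, ← neg_add, ← neg_add,
    ← Finset.sum_add_distrib, ← Finset.sum_add_distrib]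
  congr 1
  refine Finset.sum_congr rfl fun p _ => ?_
  by_cases h0 : ν p = 0
  · simp [h0]
  obtain ⟨hXp, h1, h2⟩ := coupling_ne p h0
  have a1 : pr ν (fun q => X q.2 = X p.2) = pr μ (fun ω => X ω = X p.2) :=
    pr_snd ν μ f2 (fun ω => X ω = X p.2)
  have a2 : pr ν (fun q => (γ q.2, X q.2) = (γ p.2, X p.2)) =
      pr μ (fun ω => (γ ω, X ω) = (γ p.2, X p.2)) :=
    pr_snd ν μ f2 (fun ω => (γ ω, X ω) = (γ p.2, X p.2))
  have a3 : pr ν (fun q => q.1 = p.1) = μ' p.1 := by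
    rw [pr_fst ν μ' f1 (fun ω' => ω' = p.1)]
    simp [pr]
  have b1 : 0 < pr μ (fun ω => X ω = X p.2) := pr_pos hμ _ p.2 rfl h2
  have b2 : 0 < pr μ (fun ω => (γ ω, X ω) = (γ p.2, X p.2)) := pr_pos hμ _ p.2 rfl h2
  have a4 : pr ν (fun q => (γ q.2, q.1) = (γ p.2, p.1)) =
      pr μ (fun ω => (γ ω, X ω) = (γ p.2, X p.2)) *
        (μ' p.1 / pr μ (fun ω => X ω = X p.2)) := by
    have : pr ν (fun q => (γ q.2, q.1) = (γ p.2, p.1)) =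
        ∑ ω, if γ ω = γ p.2 then ν (p.1, ω) else 0 := by
      unfold pr
      rw [Fintype.sum_prod_type, Finset.sum_eq_single p.1]
      · simp
      · intro ω' _ hne
        refine Finset.sum_eq_zero fun ω _ => if_neg ?_
        simp [hne]
      · simp
    rw [this]
    conv_rhs => enter [1]; unfold pr
    rw [Finset.sum_mul]
    refine Finset.sum_congr rfl fun ω _ => ?_
    simp only [Prod.mk.injEq, hν, coupling]
    by_cases g1 : γ ω = γ p.2 <;> by_cases g2 : X ω = X p.2
    · have g3 : X ω = X₀ p.1 := g2.trans hXp
      rw [if_pos g1, if_pos g3, if_pos ⟨g1, g2⟩, g2]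
      ring
    · have g3 : ¬ X ω = X₀ p.1 := fun h => g2 (h.trans hXp.symm)
      rw [if_pos g1, if_neg g3, if_neg (fun h => g2 h.2)]
      ring
    · rw [if_neg g1, if_neg (fun h => g1 h.1)]
      ring
    · rw [if_neg g1, if_neg (fun h => g1 h.1)]
      ring
  rw [a1, a2, a3, a4, Real.logb_mul b2.ne' (div_ne_zero h1 b1.ne'), Real.logb_div h1 b1.ne']
  ring

lemma coupling_condEnt_comp {C E : Type} (hμ : IsProb μ)
    (hX : ∀ x, pr μ' (fun ω => X₀ ω = x) = pr μ (fun ω => X ω = x)) (γ : Ω → C) (f : D → E) :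
    condEnt (coupling μ μ' X X₀) (fun p => γ p.2) (fun p => f (X₀ p.1)) =
      condEnt μ γ (fun ω => f (X ω)) := by
  set ν := coupling μ μ' X X₀ with hν
  have f2 := coupling_snd (X₀ := X₀) hμ hX
  unfold condEnt
  congr 1
  · rw [ent_congr_ae ν _ (fun p => (γ p.2, f (X p.2)))]
    · exact ent_law _ _ _ _ fun a => pr_snd ν μ f2 (fun ω => (γ ω, f (X ω)) = a)
    · intro p hp
      rw [(coupling_ne p hp).1]
  · rw [ent_congr_ae ν _ (fun p => f (X p.2))]
    · exact ent_law _ _ _ _ fun a => pr_snd ν μ f2 (fun ω => f (X ω) = a)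
    · intro p hp
      rw [(coupling_ne p hp).1]

end Coupling

lemma condMutualInfo_fst {Ω Ω' A B S : Type} [Fintype Ω] [Fintype Ω'] (ν : Ω' × Ω → ℝ)
    (μ' : Ω' → ℝ) (h : ∀ ω', ∑ ω, ν (ω', ω) = μ' ω') (a : Ω' → A) (b : Ω' → B) (s : Ω' → S) :
    condMutualInfo ν (fun p => a p.1) (fun p => b p.1) (fun p => s p.1) =
      condMutualInfo μ' a b s := by
  have key : ∀ {T : Type} (X : Ω' → T), ent ν (fun p => X p.1) = ent μ' X := fun X =>
    ent_law _ _ _ _ fun x => pr_fst ν μ' h (fun ω => X ω = x)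
  unfold condMutualInfo condEnt
  rw [key s, key (fun ω => (a ω, s ω)), key (fun ω => (b ω, s ω)),
    key (fun ω => ((a ω, b ω), s ω))]

lemma ent_le_main (k : ℕ) : ∀ {Ω A B C : Type} [Fintype Ω]
    (μ : Ω → ℝ) (_ : IsProb μ) (α : Ω → A) (β : Ω → B) (γ : Ω → C)
    (_ : CondIndepOrder μ α β k),
    ent μ γ ≤ (2:ℝ) ^ k * condEnt μ γ α + (2:ℝ) ^ k * condEnt μ γ β
        - ((2:ℝ) ^ (k + 1) - 1) * condEnt μ γ (fun ω => (α ω, β ω)) := by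
  induction k with
  | zero =>
    intro Ω A B C _ μ hμ α β γ h
    have := ent_base hμ α β γ h
    norm_num
    linarith
  | succ k ih =>
    intro Ω A B C _ μ hμ α β γ h
    obtain ⟨Ω', A', B', i', μ', α₀, β₀, αs, βs, hμ', hlaw, hs, ht, hk⟩ := h
    have hX : ∀ x, pr μ' (fun ω => (α₀ ω, β₀ ω) = x) = pr μ (fun ω => (α ω, β ω) = x) := by
      rintro ⟨x, y⟩
      simpa only [Prod.mk.injEq] using hlaw x y
    have f1 := coupling_fst (X := fun ω => (α ω, β ω)) hμ' hX
    have hν := coupling_isProb hμ hμ' hX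
    have m := coupling_condEnt hμ hμ' hX γ
    have ca := coupling_condEnt_comp hμ hX γ Prod.fst
    have cb := coupling_condEnt_comp hμ hX γ Prod.snd
    set ν := coupling μ μ' (fun ω => (α ω, β ω)) (fun ω => (α₀ ω, β₀ ω)) with hνdef
    have hI := ih ν hν (fun p => αs p.1) (fun p => βs p.1) (fun p => γ p.2)
      (condIndepOrderAux_fst ν μ' f1 αs βs k hk)
    have h1 := condEnt_le_of_condMutualInfo hν (fun p => α₀ p.1) (fun p => β₀ p.1)
      (fun p => γ p.2) (fun p => αs p.1) ((condMutualInfo_fst ν μ' f1 α₀ β₀ αs).trans hs)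
    have h2 := condEnt_le_of_condMutualInfo hν (fun p => α₀ p.1) (fun p => β₀ p.1)
      (fun p => γ p.2) (fun p => βs p.1) ((condMutualInfo_fst ν μ' f1 α₀ β₀ βs).trans ht)
    have m1 := condEnt_comp_le hν (fun p => γ p.2) (fun p => p.1)
      (fun ω => ((α₀ ω, β₀ ω), αs ω))
    have m2 := condEnt_comp_le hν (fun p => γ p.2) (fun p => p.1)
      (fun ω => ((α₀ ω, β₀ ω), βs ω))
    have m3 := condEnt_comp_le hν (fun p => γ p.2) (fun p => p.1)
      (fun ω => (αs ω, βs ω))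
    have eg : ent ν (fun p => γ p.2) = ent μ γ :=
      ent_law _ _ _ _ fun x => pr_snd ν μ (coupling_snd hμ hX) (fun ω => γ ω = x)
    rw [eg] at hI
    rw [m] at m1 m2 m3
    dsimp only at ca cb
    rw [ca, cb] at h1 h2
    have hc : (1:ℝ) ≤ 2 ^ k := one_le_pow₀ (by norm_num)
    rw [pow_succ (2:ℝ) (k+1)]
    rw [pow_succ] at hI ⊢
    generalize (2:ℝ) ^ k = c at *
    have p1 := mul_le_mul_of_nonneg_left (h1.trans (sub_le_sub_left m1 _)) (by linarith : 0 ≤ c)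
    have p2 := mul_le_mul_of_nonneg_left (h2.trans (sub_le_sub_left m2 _)) (by linarith : 0 ≤ c)
    have p3 := mul_le_mul_of_nonneg_left m3 (by linarith : 0 ≤ c * 2 - 1)
    linarith

/-- If `α` and `β` are conditionally independent of order `k` and `γ` is
arbitrary, then `H(γ) ≤ 2^k·H(γ|α) + 2^k·H(γ|β) − (2^{k+1} − 1)·H(γ|(α,β))`;
equivalently, `I(γ:(α,β)) ≤ 2^k·I(γ:α|β) + 2^k·I(γ:β|α)`. -/
theorem ent_le_of_condIndepOrder_improved {Ω A B C : Type} [Fintype Ω]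
    (μ : Ω → ℝ) (hμ : IsProb μ) (α : Ω → A) (β : Ω → B) (γ : Ω → C) (k : ℕ)
    (h : CondIndepOrder μ α β k) :
    (ent μ γ ≤ (2:ℝ) ^ k * condEnt μ γ α + (2:ℝ) ^ k * condEnt μ γ β
        - ((2:ℝ) ^ (k + 1) - 1) * condEnt μ γ (fun ω => (α ω, β ω))) ∧
    (mutualInfo μ γ (fun ω => (α ω, β ω)) ≤
        (2:ℝ) ^ k * condMutualInfo μ γ α β + (2:ℝ) ^ k * condMutualInfo μ γ β α) := by
  have main := ent_le_main k μ hμ α β γ h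
  refine ⟨main, ?_⟩
  have r1 : ent μ (fun ω => ((γ ω, α ω), β ω)) = ent μ (fun ω => (γ ω, (α ω, β ω))) :=
    ent_reindex _ _ _ fun ω ω' => by simp only [Prod.mk.injEq]; tauto
  have r2 : ent μ (fun ω => ((γ ω, β ω), α ω)) = ent μ (fun ω => (γ ω, (α ω, β ω))) :=
    ent_reindex _ _ _ fun ω ω' => by simp only [Prod.mk.injEq]; tauto
  have r3 : ent μ (fun ω => (β ω, α ω)) = ent μ (fun ω => (α ω, β ω)) :=
    ent_reindex _ _ _ fun ω ω' => by simp only [Prod.mk.injEq]; tauto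
  rw [pow_succ] at main
  simp only [mutualInfo, condMutualInfo, condEnt] at main ⊢
  rw [r1, r2, r3]
  linarith
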